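/- The 𝒢-invariant 𝒢 : Mat_{Φ,I} → ℚ^{W·δ_I} is a valuative invariant: it is valuative with respect to the indicator functions of base polytopes (i.e., whenever a_1, …, a_k ∈ ℤ and Coxeter matroids M_1, …, M_k of type (Φ,I) satisfy ∑_{i=1}^k a_i·1_{P_{M_i}} = 0 as a function on V, then ∑_{i=1}^k a_i·𝒢(M_i) = 0), and 𝒢(w·M) = 𝒢(M) for every w ∈ W and every Coxeter matroid M of type (Φ,I). -/

import Mathlib

/-!
The `w`-term of `𝒢` records the vertex of `P_M` at which the functional `⟪w z, ·⟫` is minimal: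
every nonzero `x` in the cone of positive roots has `⟪z, x⟫ > 0`, so this minimum is attained at
`min^w(M)` only (`face_of_subset`).

*Valuativity.* It suffices to show, for fixed `w` and `v`, that `∑ a_i [min^w(M_i) = v] = 0`.
Intersect each `P_{M_i}` with the compact convex set
`K = {x | ‖x - v‖ ≤ r, ⟪w z, x⟫ ≤ ⟪w z, v⟫ - ε}`. For `r` small and then `ε` small, `P_{M_i} ∩ K` is
nonempty exactly when `v ∈ P_{M_i}` and `min^w(M_i) ≠ v`. The Euler characteristic (the valuation
equal to `1` on nonempty compact convex sets) therefore kills the sum over these `i`, while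
evaluating the given relation at `v` kills the sum over all `i` with `v ∈ P_{M_i}`.

The existence of the Euler characteristic, in the form "a linear relation among indicators of
compact convex sets is also a relation after replacing each indicator by `[nonempty]`", is
`euler_compact`. It follows by projecting away one coordinate at a time from the one-dimensional
case `euler_real`, in which the number of intervals with left end point `l`, weighted by the
coefficients, is the jump at `l` of a function that vanishes identically.

*Invariance.* By uniqueness of minima, `min^w(g M) = g min^(g⁻¹ w)(M)`, and the sum over `W` is
reindexed by `w ↦ g⁻¹ w`.
-/

open RealInnerProductSpace

noncomputable def indic {V : Type*} (P : Set V) : V → ℤ := P.indicator 1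

noncomputable def iv (p : Prop) : ℤ := @ite _ p (Classical.propDecidable p) 1 0

def Valuative {V A : Type*} [AddCommGroup A] (Fam : Set (Set V)) (f : Set V → A) : Prop :=
  ∀ (k : ℕ) (a : Fin k → ℤ) (P : Fin k → Set V),
    (∀ i, P i ∈ Fam) → (∑ i, a i • indic (P i)) = 0 → (∑ i, a i • f (P i)) = 0

variable {V : Type*} [NormedAddCommGroup V] [InnerProductSpace ℝ V] [FiniteDimensional ℝ V]

def IsPolyhedron (P : Set V) : Prop :=
  P.Nonempty ∧ ∃ s : Finset (V × ℝ), P = {x | ∀ p ∈ s, ⟪p.1, x⟫ ≤ p.2}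

def IsFace (Q F : Set V) : Prop :=
  ∃ y : V, F.Nonempty ∧ F = {x | x ∈ Q ∧ ∀ q ∈ Q, ⟪y, q⟫ ≤ ⟪y, x⟫}

def IsConvexCone (C : Set V) : Prop :=
  (0 : V) ∈ C ∧ Convex ℝ C ∧ ∀ c : ℝ, 0 ≤ c → ∀ x ∈ C, c • x ∈ C

def coneGen (S : Set V) : Set V := ⋂₀ {C : Set V | IsConvexCone C ∧ S ⊆ C}

def tanCone (Q F : Set V) : Set V := coneGen {d | ∃ q ∈ Q, ∃ v ∈ F, d = q - v}

def normCone (Q F : Set V) : Set V := {y | ∀ v ∈ F, ∀ q ∈ Q, ⟪y, q⟫ ≤ ⟪y, v⟫}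

def IsExtDef (Q P : Set V) : Prop :=
  IsPolyhedron P ∧ ∀ F : Set V, IsFace P F → ∃ 𝒢 : Set (Set V),
    (∀ G ∈ 𝒢, IsFace Q G) ∧ normCone P F = ⋃ G ∈ 𝒢, normCone Q G

def lineal (C : Set V) : Set V := C ∩ (-C)

def transl (v : V) (C : Set V) : Set V := (fun x => v + x) '' C

def TightContains (C : Set V) (v : V) (P : Set V) : Prop :=
  P ⊆ transl v C ∧ (P ∩ transl v (lineal C)).Nonempty

/-- `ivq p` is `1` if the proposition `p` holds and `0` otherwise, in `ℚ`. -/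
noncomputable def ivq (p : Prop) : ℚ := @ite _ p (Classical.propDecidable p) 1 0

/-- The Weyl group of a root system `R`. -/
def WeylGrp (R : Finset V) : Subgroup (V ≃ₗᵢ[ℝ] V) :=
  Subgroup.closure {s | ∃ α ∈ R, ∀ x : V, s x = x - ((2 * ⟪x, α⟫) / ⟪α, α⟫) • α}

/-! ### Brackets -/

theorem iv_of_true {p : Prop} (h : p) : iv p = 1 := by simp [iv, h]

theorem iv_of_false {p : Prop} (h : ¬p) : iv p = 0 := by simp [iv, h]

theorem ivq_eq_cast (p : Prop) : ivq p = (iv p : ℚ) := by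
  by_cases h : p <;> simp [iv, ivq, h]

/-! ### The Euler characteristic of compact convex sets -/

/-- The weighted number of intervals with a given left end point `l` is the difference of the
values of `∑ a i * 1_{[L i, U i]}` at `l` and just below `l`. -/
theorem sum_left_endpoint_eq_zero {ι : Type*} [Fintype ι] (a : ι → ℤ) (K : ι → Set ℝ)
    (L U : ι → ℝ) (hK : ∀ i, (K i).Nonempty → K i = Set.Icc (L i) (U i))
    (h : ∀ t, ∑ i, a i * iv (t ∈ K i) = 0) (l : ℝ) :
    ∑ i, a i * iv ((K i).Nonempty ∧ L i = l) = 0 := by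
  have hev : ∀ᶠ t in nhdsWithin l (Set.Iio l), ∀ i,
      iv ((K i).Nonempty ∧ L i = l) = iv (l ∈ K i) - iv (t ∈ K i) := by
    rw [Filter.eventually_all]
    intro i
    by_cases hne : (K i).Nonempty
    · have hLU : L i ≤ U i := by
        rw [hK i hne] at hne
        exact Set.nonempty_Icc.1 hne
      have hlt : ∀ᶠ t in nhdsWithin l (Set.Iio l), t < l := self_mem_nhdsWithin
      have hgt : ∀ c < l, ∀ᶠ t in nhdsWithin l (Set.Iio l), c < t := fun c hc =>
        mem_nhdsWithin_of_mem_nhds (Ioi_mem_nhds hc)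
      rcases lt_trichotomy (L i) l with hl | hl | hl
      · rcases lt_or_ge (U i) l with hu | hu
        · filter_upwards [hlt, hgt _ hu] with t h1 h2
          rw [hK i hne, iv_of_false (fun h => hl.ne h.2), iv_of_false, iv_of_false]
          · simp
          · exact fun h => absurd h.2 (not_le.2 h2)
          · exact fun h => absurd h.2 (not_le.2 hu)
        · filter_upwards [hlt, hgt _ hl] with t h1 h2
          rw [hK i hne, iv_of_false (fun h => hl.ne h.2), iv_of_true, iv_of_true]
          · simp
          · exact ⟨h2.le, h1.le.trans hu⟩
          · exact ⟨hl.le, hu⟩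
      · filter_upwards [hlt] with t h1
        rw [iv_of_true ⟨hne, hl⟩, hK i hne, iv_of_true, iv_of_false]
        · simp
        · exact fun h => absurd h.1 (by rw [hl]; exact not_le.2 h1)
        · exact ⟨hl.le, hl ▸ hLU⟩
      · filter_upwards [hlt] with t h1
        rw [hK i hne, iv_of_false (fun h => hl.ne' h.2), iv_of_false, iv_of_false]
        · simp
        · exact fun h => absurd h.1 (not_le.2 (h1.trans hl))
        · exact fun h => absurd h.1 (not_le.2 hl)
    · refine Filter.Eventually.of_forall fun t => ?_
      rw [iv_of_false (fun h => hne h.1), iv_of_false (fun h => hne ⟨_, h⟩),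
        iv_of_false (fun h => hne ⟨_, h⟩), sub_zero]
  obtain ⟨t, ht⟩ := hev.exists
  simp only [ht, mul_sub, Finset.sum_sub_distrib, h, sub_zero]

theorem euler_real {ι : Type*} [Fintype ι] (a : ι → ℤ) (K : ι → Set ℝ)
    (hc : ∀ i, IsCompact (K i)) (hv : ∀ i, Convex ℝ (K i))
    (h : ∀ t, ∑ i, a i * iv (t ∈ K i) = 0) :
    ∑ i, a i * iv ((K i).Nonempty) = 0 := by
  have hK : ∀ i, (K i).Nonempty → K i = Set.Icc (sInf (K i)) (sSup (K i)) := fun i hne =>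
    eq_Icc_of_connected_compact ⟨hne, (hv i).isPreconnected⟩ (hc i)
  have key := sum_left_endpoint_eq_zero a K _ _ hK h
  have hsplit : ∀ i, iv ((K i).Nonempty) =
      ∑ l ∈ Finset.univ.image (fun j => sInf (K j)), iv ((K i).Nonempty ∧ sInf (K i) = l) := by
    intro i
    rw [Finset.sum_eq_single (sInf (K i))]
    · simp
    · intro l _ hl
      exact iv_of_false fun h => hl h.2.symm
    · intro hn
      exact absurd (Finset.mem_image_of_mem _ (Finset.mem_univ i)) hn
  simp_rw [hsplit, Finset.mul_sum]
  rw [Finset.sum_comm]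
  exact Finset.sum_eq_zero fun l _ => key l

/-- A linear relation between indicators of compact convex sets is respected by the Euler
characteristic. -/
theorem euler_compact {ι : Type*} [Fintype ι] (a : ι → ℤ) (P : ι → Set V)
    (hc : ∀ i, IsCompact (P i)) (hv : ∀ i, Convex ℝ (P i))
    (h : ∀ x, ∑ i, a i * iv (x ∈ P i) = 0) :
    ∑ i, a i * iv ((P i).Nonempty) = 0 := by
  classical
  let b := stdOrthonormalBasis ℝ V
  -- Coordinates are released one at a time: `s` is the set of those still fixed.
  let S : Finset (Fin (Module.finrank ℝ V)) → (Fin (Module.finrank ℝ V) → ℝ) → Set V :=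
    fun s c => {x | ∀ j ∈ s, ⟪b j, x⟫ = c j}
  have hlin : ∀ j, IsLinearMap ℝ (fun x : V => ⟪b j, x⟫) := fun j =>
    ⟨fun x y => inner_add_right _ _ _, fun r x => by simp [inner_smul_right]⟩
  have hScl : ∀ s c, IsClosed (S s c) := by
    intro s c
    simp only [S, Set.ofPred_forall]
    exact isClosed_biInter fun j _ => isClosed_eq (by fun_prop) continuous_const
  have hSv : ∀ s c, Convex ℝ (S s c) := by
    intro s c
    simp only [S, Set.ofPred_forall]
    exact convex_iInter₂ fun j _ => convex_hyperplane (hlin j) _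
  have hstep : ∀ t : Finset (Fin (Module.finrank ℝ V)), ∀ c,
      ∑ i, a i * iv ((P i ∩ S tᶜ c).Nonempty) = 0 := by
    intro t
    induction t using Finset.induction_on with
    | empty =>
      intro c
      rw [← h (∑ j, c j • b j)]
      refine Finset.sum_congr rfl fun i _ => ?_
      congr 2
      have hS : ∀ x, x ∈ S (∅ᶜ) c ↔ x = ∑ j, c j • b j := by
        intro x
        simp only [S, Finset.compl_empty, Finset.mem_univ, forall_true_left, Set.mem_ofPred_eq]
        constructor
        · intro hx
          rw [← b.sum_repr' x]
          simp [hx]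
        · rintro rfl j
          simp [inner_sum, inner_smul_right, orthonormal_iff_ite.1 b.orthonormal]
      apply propext
      constructor
      · rintro ⟨x, hx, hx'⟩
        rwa [← (hS x).1 hx']
      · exact fun hx => ⟨_, hx, (hS _).2 rfl⟩
    | insert j t hj ih =>
      intro c
      have hE := euler_real a (fun i => (fun x : V => ⟪b j, x⟫) '' (P i ∩ S (insert j t)ᶜ c))
        (fun i => ((hc i).inter_right (hScl _ _)).image (by fun_prop))
        (fun i => ((hv i).inter (hSv _ _)).is_linear_image (hlin j)) ?_
      · simpa only [Set.image_nonempty] using hE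
      · intro u
        rw [← ih (Function.update c j u)]
        refine Finset.sum_congr rfl fun i _ => ?_
        congr 2
        apply propext
        constructor
        · rintro ⟨x, ⟨hx, hxS⟩, hxu⟩
          refine ⟨x, hx, fun k hk => ?_⟩
          by_cases hkj : k = j
          · subst hkj
            simpa using hxu
          · rw [Function.update_of_ne hkj]
            exact hxS k (by simp_all)
        · rintro ⟨x, hx, hxS⟩
          refine ⟨x, ⟨hx, fun k hk => ?_⟩, ?_⟩
          · have hkj : k ≠ j := by
              rintro rfl
              simp at hk
            have := hxS k (by simp_all)
            rwa [Function.update_of_ne hkj] at this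
          · simpa using hxS j (by simpa using hj)
  simpa [S] using hstep Finset.univ 0

/-! ### Vertices selected by a linear functional -/

/-- If each compact convex `P i` has `m i` as its unique minimiser of `⟪y, ·⟫`, then
`P i ↦ [m i = v]` respects linear relations between indicators. -/
theorem sum_min_eq_zero {ι : Type*} [Fintype ι] (a : ι → ℤ) (P : ι → Set V)
    (hc : ∀ i, IsCompact (P i)) (hv : ∀ i, Convex ℝ (P i))
    (h : ∀ x, ∑ i, a i * iv (x ∈ P i) = 0) (y : V) (m : ι → V) (hm : ∀ i, m i ∈ P i)
    (hmin : ∀ i, ∀ q ∈ P i, q = m i ∨ ⟪y, m i⟫ < ⟪y, q⟫) (v : V) :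
    ∑ i, a i * iv (m i = v) = 0 := by
  obtain ⟨r, hr, hr0⟩ : ∃ r : ℝ, (∀ i, v ∉ P i → Disjoint (Metric.closedBall v r) (P i)) ∧
      0 < r := by
    have : ∀ᶠ r in nhdsWithin (0 : ℝ) (Set.Ioi 0), ∀ i, v ∉ P i →
        Disjoint (Metric.closedBall v r) (P i) := by
      rw [Filter.eventually_all]
      intro i
      by_cases hvi : v ∈ P i
      · simp [hvi]
      · obtain ⟨ρ, hρ, hsub⟩ := Metric.nhds_basis_closedBall.mem_iff.1
          ((hc i).isClosed.isOpen_compl.mem_nhds hvi)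
        filter_upwards [mem_nhdsWithin_of_mem_nhds (Iio_mem_nhds hρ)] with r hr _
        exact Set.disjoint_left.2 fun x hx =>
          hsub (Metric.closedBall_subset_closedBall (le_of_lt hr) hx)
    exact (this.and self_mem_nhdsWithin).exists
  obtain ⟨ε, hε, hε0⟩ : ∃ ε : ℝ, (∀ i, v ∈ P i ∧ m i ≠ v →
      ∃ x ∈ P i, x ∈ Metric.closedBall v r ∧ ⟪y, x⟫ ≤ ⟪y, v⟫ - ε) ∧ 0 < ε := by
    have : ∀ᶠ ε in nhdsWithin (0 : ℝ) (Set.Ioi 0), ∀ i, v ∈ P i ∧ m i ≠ v →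
        ∃ x ∈ P i, x ∈ Metric.closedBall v r ∧ ⟪y, x⟫ ≤ ⟪y, v⟫ - ε := by
      rw [Filter.eventually_all]
      intro i
      by_cases hvi : v ∈ P i ∧ m i ≠ v
      · have hlt : ⟪y, m i⟫ < ⟪y, v⟫ := (hmin i v hvi.1).resolve_left fun h => hvi.2 h.symm
        -- A point near `v` on the segment from `v` to `m i`.
        obtain ⟨s, hs, hs0, hs1⟩ : ∃ s : ℝ, v + s • (m i - v) ∈ Metric.closedBall v r ∧
            0 < s ∧ s < 1 := by
          have hcont : Filter.Tendsto (fun s : ℝ => v + s • (m i - v)) (nhds 0) (nhds v) := by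
            have : Continuous (fun s : ℝ => v + s • (m i - v)) := by fun_prop
            simpa using this.tendsto 0
          have h1 := hcont.eventually (Metric.closedBall_mem_nhds v hr0)
          have h2 : ∀ᶠ s in nhdsWithin (0 : ℝ) (Set.Ioi 0), s < 1 :=
            mem_nhdsWithin_of_mem_nhds (Iio_mem_nhds one_pos)
          have h3 : ∀ᶠ s in nhdsWithin (0 : ℝ) (Set.Ioi 0), 0 < s := self_mem_nhdsWithin
          exact ((h1.filter_mono nhdsWithin_le_nhds).and (h3.and h2)).exists
        have hpos : 0 < s * (⟪y, v⟫ - ⟪y, m i⟫) := mul_pos hs0 (sub_pos.2 hlt)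
        filter_upwards [mem_nhdsWithin_of_mem_nhds (Iio_mem_nhds hpos)] with ε hε _
        refine ⟨_, (hv i).add_smul_sub_mem hvi.1 (hm i) ⟨hs0.le, hs1.le⟩, hs, ?_⟩
        rw [inner_add_right, inner_smul_right, inner_sub_right]
        have : ε < s * (⟪y, v⟫ - ⟪y, m i⟫) := hε
        linarith
      · exact Filter.Eventually.of_forall fun _ h => absurd h hvi
    exact (this.and self_mem_nhdsWithin).exists
  have hlin : IsLinearMap ℝ (fun x : V => ⟪y, x⟫) :=
    ⟨fun x y => inner_add_right _ _ _, fun r x => by simp [inner_smul_right]⟩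
  let K : Set V := Metric.closedBall v r ∩ {x | ⟪y, x⟫ ≤ ⟪y, v⟫ - ε}
  have hKcl : IsClosed K :=
    Metric.isClosed_closedBall.inter (isClosed_le (by fun_prop) continuous_const)
  have hKv : Convex ℝ K := (convex_closedBall v r).inter (convex_halfSpace_le hlin _)
  have hE := euler_compact a (fun i => P i ∩ K) (fun i => (hc i).inter_right hKcl)
    (fun i => (hv i).inter hKv) (by
      intro x
      by_cases hx : x ∈ K
      · simpa [hx] using h x
      · exact Finset.sum_eq_zero fun i _ => by rw [iv_of_false (fun h => hx h.2), mul_zero])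
  have hid : ∀ i, iv (m i = v) = iv (v ∈ P i) - iv ((P i ∩ K).Nonempty) := by
    intro i
    by_cases hvi : v ∈ P i
    · by_cases hmv : m i = v
      · rw [iv_of_true hmv, iv_of_true hvi, iv_of_false, sub_zero]
        rintro ⟨x, hx, -, hxK⟩
        have hxK' : ⟪y, x⟫ ≤ ⟪y, v⟫ - ε := hxK
        rcases hmin i x hx with rfl | hlt
        · rw [hmv] at hxK'
          linarith
        · rw [hmv] at hlt
          linarith
      · obtain ⟨x, hx, hxb, hxy⟩ := hε i ⟨hvi, hmv⟩
        rw [iv_of_false hmv, iv_of_true hvi, iv_of_true ⟨x, hx, hxb, hxy⟩, sub_self]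
    · rw [iv_of_false (fun h : m i = v => hvi (h ▸ hm i)), iv_of_false hvi, iv_of_false, sub_zero]
      rintro ⟨x, hx, hxb, -⟩
      exact Set.disjoint_left.1 (hr i hvi) hxb hx
  simp only [hid, mul_sub, Finset.sum_sub_distrib, h, hE, sub_zero]

/-! ### Cones of positive roots -/

/-- A cone whose generators are all positive on `z` meets the half-space `⟪z, ·⟫ ≤ 0` only in the
origin. -/
theorem eq_zero_or_pos_of_mem_coneGen {S : Set V} {z : V} (hS : ∀ b ∈ S, 0 < ⟪z, b⟫) {x : V}
    (hx : x ∈ coneGen S) : x = 0 ∨ 0 < ⟪z, x⟫ := by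
  have hcone : ∀ u ∈ {x : V | x = 0 ∨ 0 < ⟪z, x⟫}, ∀ c : ℝ, 0 ≤ c →
      c • u ∈ {x : V | x = 0 ∨ 0 < ⟪z, x⟫} := by
    rintro u hu c hc
    rcases hc.eq_or_lt with rfl | hc
    · simp
    · rcases hu with rfl | hu
      · simp
      · right
        rw [inner_smul_right]
        exact mul_pos hc hu
  refine hx {x | x = 0 ∨ 0 < ⟪z, x⟫} ⟨⟨Or.inl rfl, ?_, fun c hc u hu => hcone u hu c hc⟩,
    fun b hb => Or.inr (hS b hb)⟩
  intro u hu u' hu' c d hc hd _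
  rcases hcone u hu c hc with h1 | h1 <;> rcases hcone u' hu' d hd with h2 | h2
  · left
    rw [h1, h2, add_zero]
  · rw [h1, zero_add]
    exact Or.inr h2
  · rw [h2, add_zero]
    exact Or.inr h1
  · right
    rw [inner_add_right]
    exact add_pos h1 h2

/-- If `P` lies in `b + w C`, where the generators of `C` are positive on `z`, then the functional
`⟪w z, ·⟫` is larger than at `b` at every other point of `P`. -/
theorem face_of_subset {S P : Set V} {z b : V} (hS : ∀ b ∈ S, 0 < ⟪z, b⟫) (w : V ≃ₗᵢ[ℝ] V)
    (h : P ⊆ transl b (⇑w '' coneGen S)) {q : V} (hq : q ∈ P) :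
    q = b ∨ ⟪w z, b⟫ < ⟪w z, q⟫ := by
  obtain ⟨_, ⟨x, hx, rfl⟩, rfl⟩ := h hq
  rcases eq_zero_or_pos_of_mem_coneGen hS hx with rfl | hpos
  · simp
  · right
    simpa [inner_add_right] using hpos

/-- the `𝒢`-invariant of Coxeter matroids of type `(Φ, I)` is a valuative
invariant: it is valuative with respect to indicator functions of base polytopes, and is
invariant under the `W`-action. -/
theorem G_invariant_is_valuative_invariant
    (R : Finset V) (h0 : (0 : V) ∉ R)
    (hspan : Submodule.span ℝ (R : Set V) = ⊤)
    (hrefl : ∀ a ∈ R, ∀ b ∈ R, b - ((2 * ⟪b, a⟫) / ⟪a, a⟫) • a ∈ R)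
    (hred : ∀ a ∈ R, ∀ c : ℝ, c • a ∈ (R : Set V) → c = 1 ∨ c = -1)
    (hWfin : (WeylGrp R : Set (V ≃ₗᵢ[ℝ] V)).Finite)
    (n : ℕ) (hn : n = Module.finrank ℝ V)
    (z : V) (hz : ∀ b ∈ R, ⟪z, b⟫ ≠ 0)
    (α : Fin n → V) (hαinj : Function.Injective α)
    (hsimple : ∀ b : V,
      (b ∈ R ∧ 0 < ⟪z, b⟫ ∧
        ¬∃ c ∈ R, ∃ d ∈ R, 0 < ⟪z, c⟫ ∧ 0 < ⟪z, d⟫ ∧ b = c + d) ↔ ∃ i, α i = b)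
    (ϖ : Fin n → V)
    (hϖ : ∀ i j, ⟪ϖ i, (2 / ⟪α j, α j⟫) • α j⟫ = if i = j then (1 : ℝ) else 0)
    (I : Finset (Fin n)) (δI : V) (hδ : δI = ∑ i ∈ Finset.univ \ I, ϖ i)
    (Cpos : Set V) (hCpos : Cpos = coneGen {b : V | b ∈ R ∧ 0 < ⟪z, b⟫})
    (OrbS : Set V) (hOrb : OrbS = {u : V | ∃ w ∈ WeylGrp R, u = w δI})
    (Mat : Set (Set V)) (hMat : ∀ M : Set V, M ∈ Mat ↔
      (M.Nonempty ∧ M ⊆ OrbS ∧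
        ∀ w ∈ WeylGrp R, ∃ b ∈ M, convexHull ℝ M ⊆ transl b (⇑w '' Cpos)))
    (mn : Set V → (V ≃ₗᵢ[ℝ] V) → V)
    (hmn : ∀ M ∈ Mat, ∀ w ∈ WeylGrp R,
      mn M w ∈ M ∧ convexHull ℝ M ⊆ transl (mn M w) (⇑w '' Cpos))
    (G : Set V → (↥OrbS → ℚ))
    (hG : ∀ (M : Set V) (u : ↥OrbS),
      G M u = ∑ w ∈ hWfin.toFinset, ivq (w⁻¹ (mn M w) = u.1)) :
    (∀ (k : ℕ) (a : Fin k → ℤ) (M : Fin k → Set V), (∀ i, M i ∈ Mat) →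
      (∑ i, a i • indic (convexHull ℝ (M i))) = 0 → (∑ i, a i • G (M i)) = 0) ∧
    (∀ w ∈ WeylGrp R, ∀ M ∈ Mat, G (⇑w '' M) = G M) := by
  have hS : ∀ b ∈ {b : V | b ∈ R ∧ 0 < ⟪z, b⟫}, 0 < ⟪z, b⟫ := fun b hb => hb.2
  have hOrbFin : OrbS.Finite := by
    rw [hOrb]
    refine (hWfin.image fun w => w δI).subset ?_
    rintro u ⟨w, hw, rfl⟩
    exact ⟨w, hw, rfl⟩
  have hmem : ∀ M ∈ Mat, ∀ w ∈ WeylGrp R, mn M w ∈ convexHull ℝ M := fun M hM w hw =>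
    subset_convexHull ℝ M (hmn M hM w hw).1
  have hface : ∀ M ∈ Mat, ∀ w ∈ WeylGrp R, ∀ q ∈ convexHull ℝ M,
      q = mn M w ∨ ⟪w z, mn M w⟫ < ⟪w z, q⟫ := by
    intro M hM w hw q hq
    have := (hmn M hM w hw).2
    rw [hCpos] at this
    exact face_of_subset hS w this hq
  constructor
  · intro k a M hM hrel
    have hrel' : ∀ x, ∑ i, a i * iv (x ∈ convexHull ℝ (M i)) = 0 := by
      intro x
      have := congrFun hrel x
      simp only [Finset.sum_apply, Pi.smul_apply, smul_eq_mul, Pi.zero_apply] at this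
      rw [← this]
      refine Finset.sum_congr rfl fun i _ => ?_
      by_cases hx : x ∈ convexHull ℝ (M i)
      · rw [iv_of_true hx, indic, Set.indicator_of_mem hx, Pi.one_apply]
      · rw [iv_of_false hx, indic, Set.indicator_of_notMem hx]
    funext u
    have hw : ∀ w ∈ hWfin.toFinset, ∑ i, (a i : ℚ) * ivq (w⁻¹ (mn (M i) w) = u.1) = 0 := by
      intro w hw
      have hw : w ∈ WeylGrp R := by simpa using hw
      have key := sum_min_eq_zero a (fun i => convexHull ℝ (M i))
        (fun i => (hOrbFin.subset ((hMat _).1 (hM i)).2.1).isCompact_convexHull ℝ)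
        (fun i => convex_convexHull ℝ _) hrel' (w z) (fun i => mn (M i) w)
        (fun i => hmem _ (hM i) w hw) (fun i => hface _ (hM i) w hw) (w u.1)
      have hiff : ∀ x : V, (w⁻¹ x = u.1) = (x = w u.1) := fun x =>
        propext (w.symm_apply_eq)
      simp only [hiff, ivq_eq_cast]
      exact_mod_cast key
    simp only [Finset.sum_apply, Pi.smul_apply, Pi.zero_apply, hG]
    simp only [zsmul_eq_mul, Finset.mul_sum]
    rw [Finset.sum_comm]
    exact Finset.sum_eq_zero hw
  · intro g hg M hM
    have htr : ∀ w : V ≃ₗᵢ[ℝ] V, ∀ b : V,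
        convexHull ℝ M ⊆ transl b (⇑(g⁻¹ * w) '' Cpos) →
        convexHull ℝ (⇑g '' M) ⊆ transl (g b) (⇑w '' Cpos) := by
      intro w b hb
      have himg : convexHull ℝ (⇑g '' M) = ⇑g '' convexHull ℝ M :=
        (g.toLinearEquiv.toLinearMap.image_convexHull M).symm
      rw [himg]
      rintro _ ⟨q, hq, rfl⟩
      obtain ⟨_, ⟨x, hx, rfl⟩, rfl⟩ := hb hq
      refine ⟨w x, ⟨x, hx, rfl⟩, ?_⟩
      change g b + w x = g (b + g.symm (w x))
      rw [map_add, g.apply_symm_apply]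
    have hgM : ⇑g '' M ∈ Mat := by
      obtain ⟨hne, hsub, hmin⟩ := (hMat M).1 hM
      refine (hMat _).2 ⟨hne.image _, ?_, fun w hw => ?_⟩
      · rintro _ ⟨m, hm, rfl⟩
        have := hsub hm
        rw [hOrb] at this ⊢
        obtain ⟨w, hw, rfl⟩ := this
        exact ⟨g * w, mul_mem hg hw, rfl⟩
      · obtain ⟨b, hb, hb'⟩ := hmin (g⁻¹ * w) (mul_mem (inv_mem hg) hw)
        exact ⟨g b, ⟨b, hb, rfl⟩, htr w b hb'⟩
    have hmneq : ∀ w ∈ WeylGrp R, mn (⇑g '' M) w = g (mn M (g⁻¹ * w)) := by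
      intro w hw
      obtain ⟨h1, h2⟩ := hmn M hM (g⁻¹ * w) (mul_mem (inv_mem hg) hw)
      have h3 := htr w _ h2
      rw [hCpos] at h3
      have h4 := hface _ hgM w hw (g (mn M (g⁻¹ * w))) (subset_convexHull ℝ _ ⟨_, h1, rfl⟩)
      have h5 := face_of_subset hS w h3 (hmem _ hgM w hw)
      rcases h5 with h5 | h5
      · exact h5
      · rcases h4 with h4 | h4
        · exact h4.symm
        · exact absurd h5 h4.asymm
    funext u
    rw [hG, hG]
    refine Finset.sum_bij' (fun w _ => g⁻¹ * w) (fun w _ => g * w) ?_ ?_ ?_ ?_ ?_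
    · intro w hw
      have hw : w ∈ WeylGrp R := by simpa using hw
      simpa using mul_mem (inv_mem hg) hw
    · intro w hw
      have hw : w ∈ WeylGrp R := by simpa using hw
      simpa using mul_mem hg hw
    · intro w _
      simp
    · intro w _
      simp
    · intro w hw
      have hw : w ∈ WeylGrp R := by simpa using hw
      rw [hmneq w hw, mul_inv_rev, inv_inv]
      rfl
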